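/- Let n ≥ 4, let A be the Cartan matrix of type D_n and ι an admissible sequence adapted to A. Then: (i) the set of elements of the form S_{l_p}⋯S_{l_1} x_{r,n−1} (p ≥ 0, r, l_1,…,l_p ≥ 1) equals the set of tableaux [j_1,j_2,…,j_t]^D_s in Tab_{D,ι} with j_1 = ovl(n+1) and t even; (ii) the set of elements of the form S_{l_p}⋯S_{l_1} x_{r,n} (p ≥ 0, r, l_1,…,l_p ≥ 1) equals the set of tableaux [j_1,j_2,…,j_t]^D_s in Tab_{D,ι} with j_1 = ovl(n+1) and t odd. -/

import Mathlib

noncomputable section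

/-- The coordinate linear form `x_k` (as a coefficient vector). -/
def xc (k : ℕ) : ℕ → ℚ := fun l => if l = k then 1 else 0

/-- Cartan matrix of type `A_n`. -/
def cartanA (_n : ℕ) (i j : ℕ) : ℤ :=
  if i = j then 2 else if i + 1 = j ∨ j + 1 = i then -1 else 0

/-- Cartan matrix of type `B_n`. -/
def cartanB (n : ℕ) (i j : ℕ) : ℤ :=
  if i = j then 2
  else if i = n ∧ j = n - 1 then -2
  else if i + 1 = j ∨ j + 1 = i then -1 else 0

/-- Cartan matrix of type `C_n`. -/
def cartanC (n : ℕ) (i j : ℕ) : ℤ :=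
  if i = j then 2
  else if i = n - 1 ∧ j = n then -2
  else if i + 1 = j ∨ j + 1 = i then -1 else 0

/-- Cartan matrix of type `D_n`. -/
def cartanD (n : ℕ) (i j : ℕ) : ℤ :=
  if i = j then 2
  else if (i = n - 1 ∧ j = n) ∨ (i = n ∧ j = n - 1) then 0
  else if (i + 1 = j ∨ j + 1 = i) ∨ (i = n ∧ j = n - 2) ∨ (i = n - 2 ∧ j = n) then -1
  else 0

/-- `ι` (with positions indexed by `k ≥ 1`) takes values in `{1,…,n}`, has no two equal
consecutive entries, and every index occurs infinitely often. -/
def Admissible (n : ℕ) (ι : ℕ → ℕ) : Prop :=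
  (∀ k, 1 ≤ k → 1 ≤ ι k ∧ ι k ≤ n) ∧
  (∀ k, 1 ≤ k → ι k ≠ ι (k + 1)) ∧
  (∀ i, 1 ≤ i → i ≤ n → ∀ N, ∃ k, N ≤ k ∧ ι k = i)

/-- `k^+`: the next position after `k` carrying the same letter. -/
def kplus (ι : ℕ → ℕ) (k : ℕ) : ℕ := sInf {l | k < l ∧ ι l = ι k}

/-- `k^-`: the previous position (`≥ 1`) carrying the same letter, `0` if none. -/
def kminus (ι : ℕ → ℕ) (k : ℕ) : ℕ := sSup {l | 0 < l ∧ l < k ∧ ι l = ι k}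

/-- The linear form `β_k` (with `β_0 = 0`). -/
def beta (A : ℕ → ℕ → ℤ) (ι : ℕ → ℕ) (k : ℕ) : ℕ → ℚ :=
  if k = 0 then 0
  else xc k + (∑ j ∈ Finset.Ioo k (kplus ι k), (A (ι k) (ι j) : ℚ) • xc j) + xc (kplus ι k)

/-- The piecewise-linear operator `S_k`. -/
def Sop (A : ℕ → ℕ → ℤ) (ι : ℕ → ℕ) (k : ℕ) (φ : ℕ → ℚ) : ℕ → ℚ :=
  if 0 < φ k then φ - φ k • beta A ι k
  else φ - φ k • beta A ι (kminus ι k)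

/-- Membership in `Ξ_ι`: forms obtained from some `x_{j_0}` by finitely many operators `S_k`. -/
inductive XiMem (A : ℕ → ℕ → ℤ) (ι : ℕ → ℕ) : (ℕ → ℚ) → Prop
  | base (k : ℕ) (hk : 1 ≤ k) : XiMem A ι (xc k)
  | step (k : ℕ) (hk : 1 ≤ k) (φ : ℕ → ℚ) (h : XiMem A ι φ) : XiMem A ι (Sop A ι k φ)

/-- The set `Ξ_ι`. -/
def Xi (A : ℕ → ℕ → ℤ) (ι : ℕ → ℕ) : Set (ℕ → ℚ) := { φ | XiMem A ι φ }

/-- Forms obtained from a set `g` of generators by finitely many operators `S_k`. -/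
inductive XiMemFrom (A : ℕ → ℕ → ℤ) (ι : ℕ → ℕ) (g : Set (ℕ → ℚ)) : (ℕ → ℚ) → Prop
  | base (φ : ℕ → ℚ) (h : φ ∈ g) : XiMemFrom A ι g φ
  | step (k : ℕ) (hk : 1 ≤ k) (φ : ℕ → ℚ) (h : XiMemFrom A ι g φ) :
      XiMemFrom A ι g (Sop A ι k φ)

/-- `ι` is adapted to the Cartan matrix `A`: for `i ≠ j` with `a_{i,j} ≠ 0`, consecutive
members of the subsequence of `ι` consisting of the letters `i`, `j` are distinct. -/
def Adapted (n : ℕ) (A : ℕ → ℕ → ℤ) (ι : ℕ → ℕ) : Prop :=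
  ∀ i j, 1 ≤ i → i ≤ n → 1 ≤ j → j ≤ n → i ≠ j → A i j ≠ 0 →
    ∀ k l, 1 ≤ k → k < l → (ι k = i ∨ ι k = j) → (ι l = i ∨ ι l = j) →
      (∀ m, k < m → m < l → ι m ≠ i ∧ ι m ≠ j) → ι k ≠ ι l

/-- Position of the first occurrence of the letter `i` in `ι`. -/
def firstOcc (ι : ℕ → ℕ) (i : ℕ) : ℕ := sInf {k | 1 ≤ k ∧ ι k = i}

/-- `p_{i,j} = 1` iff the first occurrence of `i` precedes the first occurrence of `j`. -/
def pval (ι : ℕ → ℕ) (i j : ℕ) : ℕ := if firstOcc ι i < firstOcc ι j then 1 else 0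

/-- The function `P(k)` for types A, B, C (and `P(k) = 0` for `k > n`, `k ≤ 1`). -/
def PABC (ι : ℕ → ℕ) (n k : ℕ) : ℕ :=
  if k ≤ n then ∑ t ∈ Finset.Icc 2 k, pval ι t (t - 1) else 0

/-- The function `P(k)` for type D. -/
def PD (ι : ℕ → ℕ) (n k : ℕ) : ℕ :=
  if k = n then (∑ t ∈ Finset.Icc 2 (n - 2), pval ι t (t - 1)) + pval ι n (n - 2)
  else if k ≤ n then ∑ t ∈ Finset.Icc 2 k, pval ι t (t - 1) else 0

/-- `occPos ι j s`: the position of the `s`-th occurrence of the letter `j` in `ι`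
(`0` for `s = 0`). -/
def occPos (ι : ℕ → ℕ) (j : ℕ) : ℕ → ℕ
  | 0 => 0
  | s + 1 => sInf {k | occPos ι j s < k ∧ ι k = j}

/-- The double-indexed coordinate form `x_{s,j}`, with the conventions
`x_{s,0} = x_{s,n+1} = 0` and `x_{s,j} = 0` for `s ≤ 0`. -/
def xsj (ι : ℕ → ℕ) (n : ℕ) (s : ℤ) (j : ℕ) : ℕ → ℚ :=
  if 1 ≤ s ∧ 1 ≤ j ∧ j ≤ n then xc (occPos ι j s.toNat) else 0

/-- The double-indexed form `β_{s,j}`. -/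
def betasj (A : ℕ → ℕ → ℤ) (ι : ℕ → ℕ) (s : ℤ) (j : ℕ) : ℕ → ℚ :=
  beta A ι (occPos ι j s.toNat)

/-- The double-indexed operator `S_{m,j}`. -/
def Ssj (A : ℕ → ℕ → ℤ) (ι : ℕ → ℕ) (m j : ℕ) (φ : ℕ → ℚ) : ℕ → ℚ :=
  Sop A ι (occPos ι j m) φ

/- Entries of the ordered sets `J_X` are encoded as natural numbers:
an unbarred entry `j ∈ {1,…,n}` is encoded as `j`, a barred entry `j̄` is
encoded as `2n+1-j` (so that `n̄ = n+1, …, 1̄ = 2n` and the total order of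
`J_B = J_C` is the numerical order), and the extra symbol `ovl(n+1)` of
types C and D is encoded as `0`. -/

/-- The box of type A. -/
def boxA (ι : ℕ → ℕ) (n : ℕ) (s : ℤ) (j : ℕ) : ℕ → ℚ :=
  xsj ι n (s + (PABC ι n j : ℤ)) j - xsj ι n (s + (PABC ι n (j - 1) : ℤ) + 1) (j - 1)

/-- The box of type B. -/
def boxB (ι : ℕ → ℕ) (n : ℕ) (s : ℤ) (e : ℕ) : ℕ → ℚ :=
  if e ≤ n then
    xsj ι n (s + (PABC ι n e : ℤ)) e - xsj ι n (s + (PABC ι n (e - 1) : ℤ) + 1) (e - 1)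
  else
    xsj ι n (s + (PABC ι n (2 * n - e) : ℤ) + (n : ℤ) - ((2 * n + 1 - e : ℕ) : ℤ) + 1)
        (2 * n - e)
      - xsj ι n (s + (PABC ι n (2 * n + 1 - e) : ℤ) + (n : ℤ) - ((2 * n + 1 - e : ℕ) : ℤ) + 1)
          (2 * n + 1 - e)

/-- The box of type C (`ovl(n+1)` encoded as `0`). -/
def boxC (ι : ℕ → ℕ) (n : ℕ) (s : ℤ) (e : ℕ) : ℕ → ℚ :=
  if e = 0 then xsj ι n (s + (PABC ι n n : ℤ)) n
  else if e < n then
    xsj ι n (s + (PABC ι n e : ℤ)) e - xsj ι n (s + (PABC ι n (e - 1) : ℤ) + 1) (e - 1)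
  else if e = n then
    (2 : ℚ) • xsj ι n (s + (PABC ι n n : ℤ)) n
      - xsj ι n (s + (PABC ι n (n - 1) : ℤ) + 1) (n - 1)
  else if e = n + 1 then
    xsj ι n (s + (PABC ι n (n - 1) : ℤ) + 1) (n - 1)
      - (2 : ℚ) • xsj ι n (s + (PABC ι n n : ℤ) + 1) n
  else
    xsj ι n (s + (PABC ι n (2 * n - e) : ℤ) + (n : ℤ) - ((2 * n + 1 - e : ℕ) : ℤ) + 1)
        (2 * n - e)
      - xsj ι n (s + (PABC ι n (2 * n + 1 - e) : ℤ) + (n : ℤ) - ((2 * n + 1 - e : ℕ) : ℤ) + 1)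
          (2 * n + 1 - e)

/-- The box of type D (`ovl(n+1)` encoded as `0`, `n̄` as `n+1`, `ovl(n-1)` as `n+2`). -/
def boxD (ι : ℕ → ℕ) (n : ℕ) (s : ℤ) (e : ℕ) : ℕ → ℚ :=
  if e = 0 then xsj ι n (s + (PD ι n n : ℤ)) n
  else if e ≤ n - 2 then
    xsj ι n (s + (PD ι n e : ℤ)) e - xsj ι n (s + (PD ι n (e - 1) : ℤ) + 1) (e - 1)
  else if e = n - 1 then
    xsj ι n (s + (PD ι n (n - 1) : ℤ)) (n - 1) + xsj ι n (s + (PD ι n n : ℤ)) n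
      - xsj ι n (s + (PD ι n (n - 2) : ℤ) + 1) (n - 2)
  else if e = n then
    xsj ι n (s + (PD ι n n : ℤ)) n - xsj ι n (s + (PD ι n (n - 1) : ℤ) + 1) (n - 1)
  else if e = n + 1 then
    xsj ι n (s + (PD ι n (n - 1) : ℤ)) (n - 1) - xsj ι n (s + (PD ι n n : ℤ) + 1) n
  else if e = n + 2 then
    xsj ι n (s + (PD ι n (n - 2) : ℤ) + 1) (n - 2)
      - xsj ι n (s + (PD ι n (n - 1) : ℤ) + 1) (n - 1)
      - xsj ι n (s + (PD ι n n : ℤ) + 1) n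
  else
    xsj ι n (s + (PD ι n (2 * n - e) : ℤ) + (n : ℤ) - ((2 * n + 1 - e : ℕ) : ℤ)) (2 * n - e)
      - xsj ι n (s + (PD ι n (2 * n + 1 - e) : ℤ) + (n : ℤ) - ((2 * n + 1 - e : ℕ) : ℤ))
          (2 * n + 1 - e)

/-- The column tableau `[j_1,…,j_k]_s = Σ_{i=1}^k box_{s+k-i}(j_i)`. -/
def tab (box : ℤ → ℕ → ℕ → ℚ) (s : ℤ) (k : ℕ) (j : ℕ → ℕ) : ℕ → ℚ :=
  ∑ i ∈ Finset.Icc 1 k, box (s + (k : ℤ) - (i : ℤ)) (j i)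

/-- The set `Tab_{A,ι}`. -/
def TabA (ι : ℕ → ℕ) (n : ℕ) : Set (ℕ → ℚ) :=
  { T | ∃ (k : ℕ) (s : ℤ) (j : ℕ → ℕ),
      1 ≤ k ∧ k ≤ n ∧
      (∀ i, 1 ≤ i → i ≤ k → 1 ≤ j i ∧ j i ≤ n + 1) ∧
      (∀ i, 1 ≤ i → i < k → j i < j (i + 1)) ∧
      1 - (PABC ι n k : ℤ) ≤ s ∧
      T = tab (boxA ι n) s k j }

/-- `|·|` on encoded entries of `J_B = J_C`. -/
def absJ (n e : ℕ) : ℕ := if e ≤ n then e else 2 * n + 1 - e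

/-- The set `Tab_{B,ι}`. -/
def TabB (ι : ℕ → ℕ) (n : ℕ) : Set (ℕ → ℚ) :=
  { T | ∃ (k : ℕ) (s : ℤ) (j : ℕ → ℕ),
      1 ≤ k ∧ k ≤ n ∧
      (∀ i, 1 ≤ i → i ≤ k → 1 ≤ j i ∧ j i ≤ 2 * n) ∧
      (∀ i, 1 ≤ i → i < k → j i < j (i + 1)) ∧
      (k = n → ∀ l m, 1 ≤ l → l < m → m ≤ k → absJ n (j l) ≠ absJ n (j m)) ∧
      1 - (PABC ι n k : ℤ) ≤ s ∧
      T = tab (boxB ι n) s k j }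

/-- Defining conditions of `Tab_{C,ι}` on the data `(k,s,j)`. -/
def TabCcond (ι : ℕ → ℕ) (n : ℕ) (k : ℕ) (s : ℤ) (j : ℕ → ℕ) : Prop :=
  (1 ≤ k ∧ k ≤ n - 1 ∧
    (∀ i, 1 ≤ i → i ≤ k → 1 ≤ j i ∧ j i ≤ 2 * n) ∧
    (∀ i, 1 ≤ i → i < k → j i < j (i + 1)) ∧
    1 - (PABC ι n k : ℤ) ≤ s)
  ∨
  (j 1 = 0 ∧ 1 ≤ k ∧ k ≤ n + 1 ∧
    (∀ i, 2 ≤ i → i ≤ k → n + 1 ≤ j i ∧ j i ≤ 2 * n) ∧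
    (∀ i, 2 ≤ i → i < k → j i < j (i + 1)) ∧
    1 - (PABC ι n n : ℤ) ≤ s)

/-- The set `Tab_{C,ι}`. -/
def TabC (ι : ℕ → ℕ) (n : ℕ) : Set (ℕ → ℚ) :=
  { T | ∃ k s j, TabCcond ι n k s j ∧ T = tab (boxC ι n) s k j }

/-- The partial order on (encoded) `J_D`: `a ≤ b` iff `a = b`, or `a < b` numerically and
`(a,b)` is not the incomparable pair `(n, n̄)`. -/
def leD (n a b : ℕ) : Prop := a = b ∨ (a < b ∧ ¬(a = n ∧ b = n + 1))

/-- Defining conditions of `Tab_{D,ι}` on the data `(k,s,j)`. -/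
def TabDcond (ι : ℕ → ℕ) (n : ℕ) (k : ℕ) (s : ℤ) (j : ℕ → ℕ) : Prop :=
  (1 ≤ k ∧ k ≤ n - 2 ∧
    (∀ i, 1 ≤ i → i ≤ k → 1 ≤ j i ∧ j i ≤ 2 * n) ∧
    (∀ i, 1 ≤ i → i < k → ¬ leD n (j (i + 1)) (j i)) ∧
    1 - (PD ι n k : ℤ) ≤ s)
  ∨
  (j 1 = 0 ∧ 1 ≤ k ∧ k ≤ n + 1 ∧
    (∀ i, 2 ≤ i → i ≤ k → n + 1 ≤ j i ∧ j i ≤ 2 * n) ∧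
    (∀ i, 2 ≤ i → i < k → j i < j (i + 1)) ∧
    (k % 2 = 0 → 1 - (PD ι n (n - 1) : ℤ) ≤ s) ∧
    (k % 2 = 1 → 1 - (PD ι n n : ℤ) ≤ s))

/-- The set `Tab_{D,ι}`. -/
def TabD (ι : ℕ → ℕ) (n : ℕ) : Set (ℕ → ℚ) :=
  { T | ∃ k s j, TabDcond ι n k s j ∧ T = tab (boxD ι n) s k j }

end

/-! ## Positions of occurrences -/

section Occ

variable {n : ℕ} {ι : ℕ → ℕ}

lemma occ_succ_spec (hadm : Admissible n ι) {i : ℕ} (h1 : 1 ≤ i) (h2 : i ≤ n) (s : ℕ) :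
    occPos ι i s < occPos ι i (s + 1) ∧ ι (occPos ι i (s + 1)) = i := by
  have hne : {k | occPos ι i s < k ∧ ι k = i}.Nonempty := by
    obtain ⟨k, hk, hk'⟩ := hadm.2.2 i h1 h2 (occPos ι i s + 1)
    exact ⟨k, hk, hk'⟩
  exact Nat.sInf_mem hne

lemma occ_le_of {i s k : ℕ} (h : occPos ι i s < k) (hk : ι k = i) :
    occPos ι i (s + 1) ≤ k := Nat.sInf_le ⟨h, hk⟩

lemma occ_strictMono (hadm : Admissible n ι) {i : ℕ} (h1 : 1 ≤ i) (h2 : i ≤ n) :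
    StrictMono (occPos ι i) :=
  strictMono_nat_of_lt_succ fun s => (occ_succ_spec hadm h1 h2 s).1

lemma occ_letter (hadm : Admissible n ι) {i : ℕ} (h1 : 1 ≤ i) (h2 : i ≤ n) {s : ℕ}
    (hs : 1 ≤ s) : ι (occPos ι i s) = i := by
  obtain ⟨t, rfl⟩ : ∃ t, s = t + 1 := ⟨s - 1, by omega⟩
  exact (occ_succ_spec hadm h1 h2 t).2

lemma occ_pos (hadm : Admissible n ι) {i : ℕ} (h1 : 1 ≤ i) (h2 : i ≤ n) {s : ℕ}
    (hs : 1 ≤ s) : 1 ≤ occPos ι i s := by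
  have := occ_strictMono hadm h1 h2 (show 0 < s by omega)
  omega

/-- A position strictly between consecutive occurrences does not carry the letter. -/
lemma occ_gap {i s k : ℕ} (h : occPos ι i s < k) (h' : k < occPos ι i (s + 1)) : ι k ≠ i := by
  intro hk
  have := occ_le_of h hk
  omega

lemma occ_surj (hadm : Admissible n ι) {k : ℕ} (hk : 1 ≤ k) :
    ∃ m, 1 ≤ m ∧ occPos ι (ι k) m = k := by
  obtain ⟨h1, h2⟩ := hadm.1 k hk
  have hmono := occ_strictMono hadm h1 h2
  have hex : ∃ m, k < occPos ι (ι k) m := ⟨k + 1, lt_of_lt_of_le (Nat.lt_succ_self k) hmono.le_apply⟩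
  classical
  have hspec := Nat.find_spec hex
  have hmin := fun m => Nat.find_min (m := m) hex
  generalize Nat.find hex = m at *
  have hm0 : m ≠ 0 := by
    rintro rfl
    simp [occPos] at hspec
  obtain ⟨t, rfl⟩ : ∃ t, m = t + 1 := ⟨m - 1, by omega⟩
  have h3 := hmin t (by omega)
  have h4 : occPos ι (ι k) t = k := by
    rcases Nat.lt_or_ge (occPos ι (ι k) t) k with h | h
    · exact absurd rfl (occ_gap h hspec)
    · omega
  refine ⟨t, ?_, h4⟩
  rcases Nat.eq_zero_or_pos t with rfl | h
  · simp [occPos] at h4; omega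
  · exact h

lemma occ_inj (hadm : Admissible n ι) {i j a b : ℕ} (hi1 : 1 ≤ i) (hi2 : i ≤ n)
    (hj1 : 1 ≤ j) (hj2 : j ≤ n) (ha : 1 ≤ a) (hb : 1 ≤ b) :
    occPos ι i a = occPos ι j b ↔ i = j ∧ a = b := by
  constructor
  · intro h
    have h1 := occ_letter hadm hi1 hi2 ha
    have h2 := occ_letter hadm hj1 hj2 hb
    have hij : i = j := by rw [← h1, ← h2, h]
    subst hij
    exact ⟨rfl, (occ_strictMono hadm hi1 hi2).injective h⟩
  · rintro ⟨rfl, rfl⟩; rfl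

lemma kplus_occ (hadm : Admissible n ι) {i m : ℕ} (h1 : 1 ≤ i) (h2 : i ≤ n) (hm : 1 ≤ m) :
    kplus ι (occPos ι i m) = occPos ι i (m + 1) := by
  simp only [kplus, occPos, occ_letter hadm h1 h2 hm]

lemma kminus_occ (hadm : Admissible n ι) {i m : ℕ} (h1 : 1 ≤ i) (h2 : i ≤ n) :
    kminus ι (occPos ι i (m + 1)) = occPos ι i m := by
  have hl := (occ_succ_spec hadm h1 h2 m)
  unfold kminus
  rcases Nat.eq_zero_or_pos m with rfl | hm
  · have : {l | 0 < l ∧ l < occPos ι i (0 + 1) ∧ ι l = ι (occPos ι i (0 + 1))} = ∅ := by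
      ext l
      simp only [Set.mem_ofPred_eq, Set.mem_empty_iff_false, iff_false]
      rintro ⟨h3, h4, h5⟩
      rw [hl.2] at h5
      exact occ_gap (s := 0) (by simpa [occPos] using h3) h4 h5
    rw [this]
    simp [occPos]
  · apply IsGreatest.csSup_eq
    refine ⟨⟨occ_pos hadm h1 h2 hm, hl.1, ?_⟩, ?_⟩
    · rw [hl.2, occ_letter hadm h1 h2 hm]
    · rintro l ⟨h3, h4, h5⟩
      rw [hl.2] at h5
      by_contra h
      exact occ_gap (by omega) h4 h5

lemma firstOcc_eq (i : ℕ) : firstOcc ι i = occPos ι i 1 := by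
  simp only [firstOcc, occPos]
  rfl

lemma occ_alt (hadm : Admissible n ι) (hadap : Adapted n (cartanD n) ι) {i j : ℕ}
    (hi1 : 1 ≤ i) (hi2 : i ≤ n) (hj1 : 1 ≤ j) (hj2 : j ≤ n) (hij : cartanD n i j = -1)
    {m l : ℕ} (hm : 1 ≤ m) (h1 : occPos ι j l < occPos ι i m)
    (h2 : occPos ι i m < occPos ι j (l + 1)) : occPos ι j (l + 1) < occPos ι i (m + 1) := by
  have hne : i ≠ j := by
    rintro rfl
    simp [cartanD] at hij
  by_contra hcon
  have hne' : occPos ι i (m + 1) ≠ occPos ι j (l + 1) := by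
    rw [Ne, occ_inj hadm hi1 hi2 hj1 hj2 (by omega) (by omega)]
    tauto
  have hlt := (occ_succ_spec hadm hi1 hi2 m).1
  have e1 := occ_letter hadm hi1 hi2 hm
  have e2 := (occ_succ_spec hadm hi1 hi2 m).2
  refine hadap i j hi1 hi2 hj1 hj2 hne (by rw [hij]; norm_num) (occPos ι i m)
    (occPos ι i (m + 1)) (occ_pos hadm hi1 hi2 hm) hlt (Or.inl e1) (Or.inl e2) ?_
    (by rw [e1, e2])
  intro t ht1 ht2
  exact ⟨occ_gap ht1 ht2, occ_gap (s := l) (by omega) (by omega)⟩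

lemma cartanD_symm (n i j : ℕ) : cartanD n i j = cartanD n j i := by
  unfold cartanD
  split_ifs <;> first | rfl | omega

lemma occ_interleave (hadm : Admissible n ι) (hadap : Adapted n (cartanD n) ι) {i j : ℕ}
    (hi1 : 1 ≤ i) (hi2 : i ≤ n) (hj1 : 1 ≤ j) (hj2 : j ≤ n) (hij : cartanD n i j = -1)
    (h : occPos ι i 1 < occPos ι j 1) (m : ℕ) :
    occPos ι i (m + 1) < occPos ι j (m + 1) ∧ occPos ι j (m + 1) < occPos ι i (m + 2) := by
  induction m with
  | zero =>
    refine ⟨h, occ_alt hadm hadap hi1 hi2 hj1 hj2 hij (le_refl 1) ?_ h⟩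
    exact occ_pos hadm hi1 hi2 (le_refl 1)
  | succ m ih =>
    have hji : cartanD n j i = -1 := by rw [cartanD_symm]; exact hij
    have h1 := occ_alt hadm hadap hj1 hj2 hi1 hi2 hji (m := m + 1) (by omega) ih.1 ih.2
    exact ⟨h1, occ_alt hadm hadap hi1 hi2 hj1 hj2 hij (m := m + 2) (by omega) ih.2 h1⟩

lemma pval_swap (hadm : Admissible n ι) {i j : ℕ}
    (hi1 : 1 ≤ i) (hi2 : i ≤ n) (hj1 : 1 ≤ j) (hj2 : j ≤ n) (hij : i ≠ j) :
    pval ι i j + pval ι j i = 1 := by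
  have : occPos ι i 1 ≠ occPos ι j 1 := by
    rw [Ne, occ_inj hadm hi1 hi2 hj1 hj2 le_rfl le_rfl]; tauto
  simp only [pval, firstOcc_eq]
  split_ifs <;> omega

/-- Between the `m`-th and `(m+1)`-st occurrence of `i` there is exactly one `j`. -/
lemma occ_between (hadm : Admissible n ι) (hadap : Adapted n (cartanD n) ι) {i j : ℕ}
    (hi1 : 1 ≤ i) (hi2 : i ≤ n) (hj1 : 1 ≤ j) (hj2 : j ≤ n) (hij : cartanD n i j = -1)
    {m : ℕ} (hm : 1 ≤ m) :
    1 ≤ m + pval ι j i ∧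
    occPos ι j (m + pval ι j i - 1) < occPos ι i m ∧
    occPos ι i m < occPos ι j (m + pval ι j i) ∧
    occPos ι j (m + pval ι j i) < occPos ι i (m + 1) ∧
    occPos ι i (m + 1) < occPos ι j (m + pval ι j i + 1) := by
  have hne : i ≠ j := by
    rintro rfl
    simp [cartanD] at hij
  have hne' : occPos ι i 1 ≠ occPos ι j 1 := by
    rw [Ne, occ_inj hadm hi1 hi2 hj1 hj2 le_rfl le_rfl]; tauto
  have hji : cartanD n j i = -1 := by rw [cartanD_symm]; exact hij
  obtain ⟨t, rfl⟩ : ∃ t, m = t + 1 := ⟨m - 1, by omega⟩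
  rcases lt_or_gt_of_ne hne' with h | h
  · have hp : pval ι j i = 0 := by
      simp only [pval, firstOcc_eq]; split_ifs <;> omega
    have H := occ_interleave hadm hadap hi1 hi2 hj1 hj2 hij h
    rw [hp]
    refine ⟨by omega, ?_, (H t).1, (H t).2, (H (t + 1)).1⟩
    rcases Nat.eq_zero_or_pos t with rfl | ht
    · exact occ_pos hadm hi1 hi2 (le_refl 1)
    · obtain ⟨u, rfl⟩ : ∃ u, t = u + 1 := ⟨t - 1, by omega⟩
      exact (H u).2
  · have hp : pval ι j i = 1 := by
      simp only [pval, firstOcc_eq]; split_ifs <;> omega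
    have H := occ_interleave hadm hadap hj1 hj2 hi1 hi2 hji h
    rw [hp]
    exact ⟨by omega, (H t).1, (H t).2, (H (t + 1)).1, (H (t + 1)).2⟩

lemma beta_apply (A : ℕ → ℕ → ℤ) {k : ℕ} (hk : 1 ≤ k) (l : ℕ) :
    beta A ι k l = (if l = k then 1 else 0) +
      (if k < l ∧ l < kplus ι k then (A (ι k) (ι l) : ℚ) else 0) +
      (if l = kplus ι k then 1 else 0) := by
  unfold beta
  rw [if_neg (by omega)]
  simp only [Pi.add_apply, Finset.sum_apply, Pi.smul_apply, xc, smul_eq_mul, mul_ite, mul_one,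
    mul_zero, Finset.sum_ite_eq, Finset.mem_Ioo]

lemma beta_occ (hadm : Admissible n ι) (hadap : Adapted n (cartanD n) ι) {i : ℕ}
    (hi1 : 1 ≤ i) (hi2 : i ≤ n) {m : ℕ} (hm : 1 ≤ m) :
    beta (cartanD n) ι (occPos ι i m) = xc (occPos ι i m) + xc (occPos ι i (m + 1)) -
      ∑ j ∈ (Finset.Icc 1 n).filter (fun j => cartanD n i j = -1),
        xc (occPos ι j (m + pval ι j i)) := by
  ext l
  rw [beta_apply _ (occ_pos hadm hi1 hi2 hm), kplus_occ hadm hi1 hi2 hm,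
    occ_letter hadm hi1 hi2 hm]
  simp only [Pi.sub_apply, Pi.add_apply, Finset.sum_apply, xc]
  have key : (if occPos ι i m < l ∧ l < occPos ι i (m + 1) then (cartanD n i (ι l) : ℚ) else 0) =
      - ∑ j ∈ (Finset.Icc 1 n).filter (fun j => cartanD n i j = -1),
        (if l = occPos ι j (m + pval ι j i) then (1 : ℚ) else 0) := by
    by_cases hl : occPos ι i m < l ∧ l < occPos ι i (m + 1)
    · rw [if_pos hl]
      have hl1 : 1 ≤ l := by omega
      obtain ⟨hj1, hj2⟩ := hadm.1 l hl1
      have hne : ι l ≠ i := occ_gap hl.1 hl.2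
      by_cases hA : cartanD n i (ι l) = -1
      · rw [Finset.sum_eq_single (ι l)]
        · obtain ⟨b0, b1, b2, b3, b4⟩ := occ_between hadm hadap hi1 hi2 hj1 hj2 hA hm
          have h5 : l = occPos ι (ι l) (m + pval ι (ι l) i) := by
            rcases lt_trichotomy l (occPos ι (ι l) (m + pval ι (ι l) i)) with h | h | h
            · exfalso
              obtain ⟨u, hu⟩ : ∃ u, m + pval ι (ι l) i = u + 1 := ⟨_, (Nat.sub_add_cancel b0).symm⟩
              rw [hu] at h b1
              exact occ_gap (lt_trans b1 hl.1) h rfl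
            · exact h
            · exact absurd rfl (occ_gap h (lt_trans hl.2 b4))
          rw [if_pos h5, hA]
          norm_num
        · intro j hj hjl
          simp only [Finset.mem_filter, Finset.mem_Icc] at hj
          rw [if_neg]
          intro h
          apply hjl
          rw [h, occ_letter hadm hj.1.1 hj.1.2 (by omega)]
        · intro h
          exfalso
          apply h
          simp only [Finset.mem_filter, Finset.mem_Icc]
          exact ⟨⟨hj1, hj2⟩, hA⟩
      · rw [Finset.sum_eq_zero]
        · have : cartanD n i (ι l) = 0 := by
            unfold cartanD at hA ⊢
            split_ifs at hA ⊢ <;> first | rfl | omega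
          rw [this]; simp
        · intro j hj
          simp only [Finset.mem_filter, Finset.mem_Icc] at hj
          rw [if_neg]
          intro h
          apply hA
          have : ι l = j := by rw [h, occ_letter hadm hj.1.1 hj.1.2 (by omega)]
          rw [this]; exact hj.2
    · rw [if_neg hl, Finset.sum_eq_zero]
      · simp
      · intro j hj
        simp only [Finset.mem_filter, Finset.mem_Icc] at hj
        obtain ⟨b0, b1, b2, b3, b4⟩ := occ_between hadm hadap hi1 hi2 hj.1.1 hj.1.2 hj.2 hm
        rw [if_neg]
        rintro rfl
        exact hl ⟨b2, b3⟩
  rw [key]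
  ring

end Occ

/-! ## Shifted coordinates -/

/-- `y_{M,i} = x_{M + P(i), i}`. -/
noncomputable def YY (ι : ℕ → ℕ) (n : ℕ) (M : ℤ) (i : ℕ) : ℕ → ℚ :=
  xsj ι n (M + (PD ι n i : ℤ)) i

section Shifted

variable {n : ℕ} {ι : ℕ → ℕ}

lemma PD_succ {i : ℕ} (h1 : 1 ≤ i) (h2 : i + 1 ≤ n - 1) :
    PD ι n (i + 1) = PD ι n i + pval ι (i + 1) i := by
  unfold PD
  rw [if_neg (by omega), if_pos (by omega), if_neg (by omega), if_pos (by omega),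
    Finset.sum_Icc_succ_top (by omega)]
  simp

lemma PD_last (hn : 4 ≤ n) : PD ι n n = PD ι n (n - 2) + pval ι n (n - 2) := by
  unfold PD
  rw [if_pos rfl, if_neg (by omega), if_pos (by omega)]

lemma pval_le (i j : ℕ) : pval ι i j ≤ 1 := by
  unfold pval; split_ifs <;> omega

/-- `P` grows by at most one at each step. -/
lemma PD_growth {i j : ℕ} (h1 : 1 ≤ i) (hij : i ≤ j) (h2 : j ≤ n - 1) :
    PD ι n i ≤ PD ι n j ∧ PD ι n j ≤ PD ι n i + (j - i) := by
  induction j, hij using Nat.le_induction with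
  | base => simp
  | succ j hj ih =>
    have := ih (by omega)
    rw [PD_succ (by omega) h2]
    have := pval_le (ι := ι) (j + 1) j
    omega

lemma YY_zero (M : ℤ) : YY ι n M 0 = 0 := by
  simp [YY, xsj]

lemma YY_eq {M : ℤ} {i m : ℕ} (hi1 : 1 ≤ i) (hi2 : i ≤ n) (hm : 1 ≤ m)
    (h : M + (PD ι n i : ℤ) = m) : YY ι n M i = xc (occPos ι i m) := by
  unfold YY xsj
  rw [if_pos ⟨by omega, hi1, hi2⟩, h]
  simp

lemma YY_apply (hadm : Admissible n ι) (M : ℤ) (i : ℕ) {i' m : ℕ} (hi1 : 1 ≤ i') (hi2 : i' ≤ n)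
    (hm : 1 ≤ m) :
    YY ι n M i (occPos ι i' m) = if i = i' ∧ M + (PD ι n i : ℤ) = m then 1 else 0 := by
  unfold YY xsj
  by_cases h : 1 ≤ M + (PD ι n i : ℤ) ∧ 1 ≤ i ∧ i ≤ n
  · rw [if_pos h, xc]
    congr 1
    rw [occ_inj hadm hi1 hi2 h.2.1 h.2.2 hm (by omega)]
    apply propext
    omega
  · rw [if_neg h, if_neg]
    · rfl
    · rintro ⟨rfl, h'⟩
      omega

lemma cartanD_iff (n i j : ℕ) : cartanD n i j = -1 ↔
    i ≠ j ∧ ¬((i = n - 1 ∧ j = n) ∨ (i = n ∧ j = n - 1)) ∧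
      ((i + 1 = j ∨ j + 1 = i) ∨ (i = n ∧ j = n - 2) ∨ (i = n - 2 ∧ j = n)) := by
  unfold cartanD
  split_ifs with h1 h2 h3
  · simp [h1]
  · simp [h2]
  · exact ⟨fun _ => ⟨h1, h2, h3⟩, fun _ => rfl⟩
  · exact ⟨fun h => absurd h (by norm_num), fun h => absurd h.2.2 h3⟩

lemma beta_low (hn : 4 ≤ n) (hadm : Admissible n ι) (hadap : Adapted n (cartanD n) ι)
    {i m : ℕ} {M : ℤ} (hi1 : 1 ≤ i) (hi2 : i + 1 ≤ n - 2) (hm : 1 ≤ m)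
    (hM : M + (PD ι n i : ℤ) = m) :
    beta (cartanD n) ι (occPos ι i m) = YY ι n M i + YY ι n (M + 1) i
      - YY ι n (M + 1) (i - 1) - YY ι n M (i + 1) := by
  rw [beta_occ hadm hadap hi1 (by omega) hm,
    YY_eq (m := m) hi1 (by omega) hm hM, YY_eq (m := m + 1) hi1 (by omega) (by omega) (by omega)]
  have hs := PD_succ (n := n) (ι := ι) hi1 (by omega)
  rw [YY_eq (i := i + 1) (m := m + pval ι (i + 1) i) (by omega) (by omega) (by omega) (by omega)]
  rcases Nat.lt_or_ge 1 i with h | h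
  · have hset : (Finset.Icc 1 n).filter (fun j => cartanD n i j = -1) = {i - 1, i + 1} := by
      ext j
      simp only [Finset.mem_filter, Finset.mem_Icc, Finset.mem_insert, Finset.mem_singleton, cartanD_iff, true_and]
      omega
    have hs' := PD_succ (n := n) (ι := ι) (i := i - 1) (by omega) (by omega)
    have hsw := pval_swap hadm (i := i) (j := i - 1) (by omega) (by omega) (by omega) (by omega)
      (by omega)
    rw [Nat.sub_add_cancel hi1] at hs'
    rw [hset, Finset.sum_pair (by omega),
      YY_eq (i := i - 1) (m := m + pval ι (i - 1) i) (by omega) (by omega) (by omega) (by omega)]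
    abel
  · obtain rfl : i = 1 := by omega
    have hset : (Finset.Icc 1 n).filter (fun j => cartanD n 1 j = -1) = {2} := by
      ext j
      simp only [Finset.mem_filter, Finset.mem_Icc, Finset.mem_singleton, cartanD_iff, true_and]
      omega
    rw [hset, Finset.sum_singleton]
    simp only [Nat.sub_self, YY_zero]
    abel

lemma beta_mid (hn : 4 ≤ n) (hadm : Admissible n ι) (hadap : Adapted n (cartanD n) ι)
    {m : ℕ} {M : ℤ} (hm : 1 ≤ m)
    (hM : M + (PD ι n (n - 2) : ℤ) = m) :
    beta (cartanD n) ι (occPos ι (n - 2) m) = YY ι n M (n - 2) + YY ι n (M + 1) (n - 2)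
      - YY ι n (M + 1) (n - 3) - YY ι n M (n - 1) - YY ι n M n := by
  rw [beta_occ hadm hadap (by omega) (by omega) hm,
    YY_eq (m := m) (by omega) (by omega) hm hM,
    YY_eq (m := m + 1) (by omega) (by omega) (by omega) (by omega)]
  have hs := PD_succ (n := n) (ι := ι) (i := n - 2) (by omega) (by omega)
  rw [show n - 2 + 1 = n - 1 by omega] at hs
  have hl := PD_last (ι := ι) hn
  rw [YY_eq (i := n - 1) (m := m + pval ι (n - 1) (n - 2)) (by omega) (by omega) (by omega)
    (by omega)]
  rw [YY_eq (i := n) (m := m + pval ι n (n - 2)) (by omega) (by omega) (by omega) (by omega)]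
  have hset : (Finset.Icc 1 n).filter (fun j => cartanD n (n - 2) j = -1)
      = {n - 3, n - 1, n} := by
    ext j
    simp only [Finset.mem_filter, Finset.mem_Icc, Finset.mem_insert, Finset.mem_singleton, cartanD_iff, true_and]
    omega
  have hs' := PD_succ (n := n) (ι := ι) (i := n - 3) (by omega) (by omega)
  rw [show n - 3 + 1 = n - 2 by omega] at hs'
  have hsw := pval_swap hadm (i := n - 2) (j := n - 3) (by omega) (by omega) (by omega) (by omega)
    (by omega)
  rw [hset, Finset.sum_insert (by simp; omega), Finset.sum_pair (by omega),
    YY_eq (i := n - 3) (m := m + pval ι (n - 3) (n - 2)) (by omega) (by omega) (by omega)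
      (by omega)]
  abel

lemma beta_pen (hn : 4 ≤ n) (hadm : Admissible n ι) (hadap : Adapted n (cartanD n) ι)
    {m : ℕ} {M : ℤ} (hm : 1 ≤ m)
    (hM : M + (PD ι n (n - 1) : ℤ) = m) :
    beta (cartanD n) ι (occPos ι (n - 1) m) = YY ι n M (n - 1) + YY ι n (M + 1) (n - 1)
      - YY ι n (M + 1) (n - 2) := by
  rw [beta_occ hadm hadap (by omega) (by omega) hm,
    YY_eq (m := m) (by omega) (by omega) hm hM,
    YY_eq (m := m + 1) (by omega) (by omega) (by omega) (by omega)]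
  have hset : (Finset.Icc 1 n).filter (fun j => cartanD n (n - 1) j = -1) = {n - 2} := by
    ext j
    simp only [Finset.mem_filter, Finset.mem_Icc, Finset.mem_singleton, cartanD_iff, true_and]
    omega
  have hs' := PD_succ (n := n) (ι := ι) (i := n - 2) (by omega) (by omega)
  rw [show n - 2 + 1 = n - 1 by omega] at hs'
  have hsw := pval_swap hadm (i := n - 1) (j := n - 2) (by omega) (by omega) (by omega) (by omega)
    (by omega)
  rw [hset, Finset.sum_singleton,
    YY_eq (i := n - 2) (m := m + pval ι (n - 2) (n - 1)) (by omega) (by omega) (by omega)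
      (by omega)]

lemma beta_last (hn : 4 ≤ n) (hadm : Admissible n ι) (hadap : Adapted n (cartanD n) ι)
    {m : ℕ} {M : ℤ} (hm : 1 ≤ m)
    (hM : M + (PD ι n n : ℤ) = m) :
    beta (cartanD n) ι (occPos ι n m) = YY ι n M n + YY ι n (M + 1) n
      - YY ι n (M + 1) (n - 2) := by
  rw [beta_occ hadm hadap (by omega) (by omega) hm,
    YY_eq (m := m) (by omega) (by omega) hm hM,
    YY_eq (m := m + 1) (by omega) (by omega) (by omega) (by omega)]
  have hset : (Finset.Icc 1 n).filter (fun j => cartanD n n j = -1) = {n - 2} := by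
    ext j
    simp only [Finset.mem_filter, Finset.mem_Icc, Finset.mem_singleton, cartanD_iff, true_and]
    omega
  have hs' := PD_last (ι := ι) hn
  have hsw := pval_swap hadm (i := n) (j := n - 2) (by omega) (by omega) (by omega) (by omega)
    (by omega)
  rw [hset, Finset.sum_singleton,
    YY_eq (i := n - 2) (m := m + pval ι (n - 2) n) (by omega) (by omega) (by omega)
      (by omega)]

/-! ## Barred boxes -/

lemma box_zero (s : ℤ) : boxD ι n s 0 = YY ι n s n := by
  simp [boxD, YY]

lemma box_n (hn : 4 ≤ n) (s : ℤ) :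
    boxD ι n s (2 * n + 1 - n) = YY ι n s (n - 1) - YY ι n (s + 1) n := by
  have e : 2 * n + 1 - n = n + 1 := by omega
  unfold boxD YY
  rw [e, if_neg (by omega), if_neg (by omega), if_neg (by omega), if_neg (by omega), if_pos rfl,
    add_right_comm s 1]

lemma box_pen (hn : 4 ≤ n) (s : ℤ) :
    boxD ι n s (2 * n + 1 - (n - 1)) =
      YY ι n (s + 1) (n - 2) - YY ι n (s + 1) (n - 1) - YY ι n (s + 1) n := by
  have e : 2 * n + 1 - (n - 1) = n + 2 := by omega
  unfold boxD YY
  rw [e, if_neg (by omega), if_neg (by omega), if_neg (by omega), if_neg (by omega),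
    if_neg (by omega), if_pos rfl]
  simp only [add_right_comm s 1]

lemma box_low (hn : 4 ≤ n) (s : ℤ) {b : ℕ} (h1 : 1 ≤ b) (h2 : b ≤ n - 2) :
    boxD ι n s (2 * n + 1 - b) =
      YY ι n (s + n - b) (b - 1) - YY ι n (s + n - b) b := by
  have e1 : 2 * n - (2 * n + 1 - b) = b - 1 := by omega
  have e2 : 2 * n + 1 - (2 * n + 1 - b) = b := by omega
  unfold boxD YY
  rw [if_neg (by omega), if_neg (by omega), if_neg (by omega), if_neg (by omega),
    if_neg (by omega), if_neg (by omega), e1, e2]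
  congr 2 <;> ring

/-! ## Tableaux indexed by sets -/

/-- Number of elements of `B` below `b`. -/
def DD (B : Finset ℕ) (b : ℕ) : ℤ := ((B.filter (fun c => c < b)).card : ℤ)

/-- The tableau with first entry `ovl(n+1)` and barred entries given by the set `B`. -/
noncomputable def TT (ι : ℕ → ℕ) (n : ℕ) (s : ℤ) (B : Finset ℕ) : ℕ → ℚ :=
  boxD ι n (s + (B.card : ℤ)) 0 + ∑ b ∈ B, boxD ι n (s + DD B b) (2 * n + 1 - b)

lemma DD_insert {B : Finset ℕ} {a : ℕ} (ha : a ∉ B) (b : ℕ) :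
    DD (insert a B) b = DD B b + if a < b then 1 else 0 := by
  unfold DD
  rw [Finset.filter_insert]
  split_ifs
  · rw [Finset.card_insert_of_notMem (by simp [ha])]; simp
  · simp

lemma DD_succ (B : Finset ℕ) (b : ℕ) : DD B (b + 1) = DD B b + if b ∈ B then 1 else 0 := by
  unfold DD
  split_ifs with h
  · have : B.filter (fun c => c < b + 1) = insert b (B.filter (fun c => c < b)) := by
      ext c
      simp only [Finset.mem_filter, Finset.mem_insert]
      constructor
      · rintro ⟨h1, h2⟩
        by_cases hc : c = b
        · exact Or.inl hc
        · exact Or.inr ⟨h1, by omega⟩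
      · rintro (rfl | ⟨h1, h2⟩)
        · exact ⟨h, by omega⟩
        · exact ⟨h1, by omega⟩
    rw [this, Finset.card_insert_of_notMem (by simp)]
    simp
  · have : B.filter (fun c => c < b + 1) = B.filter (fun c => c < b) := by
      ext c
      simp only [Finset.mem_filter]
      constructor
      · rintro ⟨h1, h2⟩
        refine ⟨h1, ?_⟩
        have : c ≠ b := by rintro rfl; exact h h1
        omega
      · rintro ⟨h1, h2⟩
        exact ⟨h1, by omega⟩
    rw [this]; simp

lemma DD_nonneg (B : Finset ℕ) (b : ℕ) : 0 ≤ DD B b := by unfold DD; positivity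

lemma DD_top {B : Finset ℕ} (hB : B ⊆ Finset.Icc 1 n) : DD B (n + 1) = B.card := by
  unfold DD
  rw [Finset.filter_true_of_mem]
  intro c hc
  have := Finset.mem_Icc.1 (hB hc)
  omega

lemma card_eq (hn : 4 ≤ n) {B : Finset ℕ} (hB : B ⊆ Finset.Icc 1 n) :
    (B.card : ℤ) = DD B (n - 1) + (if n - 1 ∈ B then 1 else 0) + (if n ∈ B then 1 else 0) := by
  rw [← DD_top hB, DD_succ]
  have := DD_succ B (n - 1)
  rw [Nat.sub_add_cancel (by omega)] at this
  rw [this]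

/-- Sum over the tableau after inserting a new element. -/
lemma TT_insert (s : ℤ) {C : Finset ℕ} {a : ℕ} (ha : a ∉ C) :
    TT ι n s (insert a C) = boxD ι n (s + (C.card : ℤ) + 1) 0
      + boxD ι n (s + DD C a) (2 * n + 1 - a)
      + ∑ b ∈ C, boxD ι n (s + (DD C b + if a < b then 1 else 0)) (2 * n + 1 - b) := by
  unfold TT
  rw [Finset.sum_insert ha, Finset.card_insert_of_notMem ha, DD_insert ha]
  simp only [lt_irrefl, if_false, add_zero, Nat.cast_add, Nat.cast_one, ← add_assoc]
  congr 1
  apply Finset.sum_congr rfl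
  intro b hb
  rw [DD_insert ha, add_assoc]

/-- Replacing `i+1` by `i` subtracts a `β`. -/
lemma TT_swap (hn : 4 ≤ n) (hadm : Admissible n ι) (hadap : Adapted n (cartanD n) ι)
    (s : ℤ) {C : Finset ℕ} {i m : ℕ} (hi1 : 1 ≤ i) (hi2 : i ≤ n - 1)
    (h1 : i ∉ C) (h2 : i + 1 ∉ C) (hm : 1 ≤ m)
    (hM : s + DD C i + n - i - 1 + (PD ι n i : ℤ) = m) :
    TT ι n s (insert i C) = TT ι n s (insert (i + 1) C)
      - beta (cartanD n) ι (occPos ι i m) := by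
  rw [TT_insert s h1, TT_insert s h2]
  have hD : DD C (i + 1) = DD C i := by rw [DD_succ, if_neg h1, add_zero]
  have hsum : ∑ b ∈ C, boxD ι n (s + (DD C b + if i < b then 1 else 0)) (2 * n + 1 - b)
      = ∑ b ∈ C, boxD ι n (s + (DD C b + if i + 1 < b then 1 else 0)) (2 * n + 1 - b) := by
    apply Finset.sum_congr rfl
    intro b hb
    have : b ≠ i + 1 := by rintro rfl; exact h2 hb
    have : (if i < b then (1 : ℤ) else 0) = if i + 1 < b then 1 else 0 := by
      split_ifs <;> omega
    rw [this]
  rw [hsum, hD]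
  have key : boxD ι n (s + DD C i) (2 * n + 1 - i) =
      boxD ι n (s + DD C i) (2 * n + 1 - (i + 1)) - beta (cartanD n) ι (occPos ι i m) := by
    generalize DD C i = d at *
    rcases lt_trichotomy (i + 1) (n - 1) with h | h | h
    · rw [beta_low hn hadm hadap hi1 (by omega) hm hM, box_low hn _ hi1 (by omega),
        box_low hn _ (by omega) (by omega)]
      rw [show s + d + n - ((i + 1 : ℕ) : ℤ) = s + d + n - i - 1 by push_cast; ring,
        show s + d + n - (i : ℤ) - 1 + 1 = s + d + n - i by ring]
      simp only [Nat.add_sub_cancel]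
      abel
    · obtain rfl : i = n - 2 := by omega
      rw [beta_mid hn hadm hadap hm hM, box_low hn _ hi1 (by omega), h, box_pen hn]
      have e : ((n - 2 : ℕ) : ℤ) = n - 2 := by omega
      rw [e, show s + d + n - ((n : ℤ) - 2) - 1 + 1 = s + d + 2 by ring,
        show s + d + n - ((n : ℤ) - 2) - 1 = s + d + 1 by ring,
        show s + d + n - ((n : ℤ) - 2) = s + d + 2 by ring, show n - 2 - 1 = n - 3 by omega]
      abel
    · obtain rfl : i = n - 1 := by omega
      rw [beta_pen hn hadm hadap hm hM, box_pen hn, Nat.sub_add_cancel (by omega), box_n hn]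
      have e : ((n - 1 : ℕ) : ℤ) = n - 1 := by omega
      rw [e, show s + d + n - ((n : ℤ) - 1) - 1 + 1 = s + d + 1 by ring,
        show s + d + n - ((n : ℤ) - 1) - 1 = s + d by ring]
      abel
  rw [key]
  abel

/-- Adding `n-1` and `n` subtracts a `β`. -/
lemma TT_add (hn : 4 ≤ n) (hadm : Admissible n ι) (hadap : Adapted n (cartanD n) ι)
    (s : ℤ) {C : Finset ℕ} {m : ℕ} (hC : C ⊆ Finset.Icc 1 n)
    (h1 : n - 1 ∉ C) (h2 : n ∉ C) (hm : 1 ≤ m)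
    (hM : s + DD C (n - 1) + (PD ι n n : ℤ) = m) :
    TT ι n s (insert n (insert (n - 1) C)) = TT ι n s C
      - beta (cartanD n) ι (occPos ι n m) := by
  have h2' : n ∉ insert (n - 1) C := by
    simp only [Finset.mem_insert, not_or]
    exact ⟨by omega, h2⟩
  have hcard := card_eq hn hC
  rw [if_neg h1, if_neg h2] at hcard
  have hDn : DD C n = DD C (n - 1) := by
    have := DD_succ C (n - 1)
    rw [Nat.sub_add_cancel (by omega), if_neg h1] at this
    rw [this, add_zero]
  rw [TT_insert s h2', Finset.sum_insert h1, Finset.card_insert_of_notMem h1]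
  simp only [DD_insert h1]
  rw [if_pos (by omega), if_neg (by omega), if_neg (by omega)]
  have hsum : ∑ b ∈ C, boxD ι n (s + (DD C b + (if n - 1 < b then 1 else 0)
      + if n < b then 1 else 0)) (2 * n + 1 - b)
      = ∑ b ∈ C, boxD ι n (s + DD C b) (2 * n + 1 - b) := by
    apply Finset.sum_congr rfl
    intro b hb
    have hb1 : b ≠ n - 1 := by rintro rfl; exact h1 hb
    have hb2 : b ≠ n := by rintro rfl; exact h2 hb
    have := Finset.mem_Icc.1 (hC hb)
    rw [if_neg (by omega), if_neg (by omega)]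
    simp
  rw [hsum]
  unfold TT
  push_cast
  rw [hcard, hDn]
  generalize DD C (n - 1) = d at *
  rw [beta_last hn hadm hadap hm hM, box_zero, box_zero, box_n hn, box_pen hn]
  simp only [add_zero, ← add_assoc]
  abel

end Shifted

section Main

variable {n : ℕ} {ι : ℕ → ℕ}

/-! ## Coefficients -/

lemma YY_apply' (hadm : Admissible n ι) (M : ℤ) (i : ℕ) {i' m : ℕ} (hi1 : 1 ≤ i') (hi2 : i' ≤ n)
    (hm : 1 ≤ m) :
    YY ι n M i (occPos ι i' m) = if i = i' ∧ M + (PD ι n i' : ℤ) = m then 1 else 0 := by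
  rw [YY_apply hadm M i hi1 hi2 hm]
  by_cases h : i = i'
  · subst h; rfl
  · simp [h]

lemma box_coeff_low (hn : 4 ≤ n) (hadm : Admissible n ι) (t : ℤ) {b i m : ℕ}
    (hb1 : 1 ≤ b) (hb2 : b ≤ n) (hi1 : 1 ≤ i) (hi2 : i ≤ n - 1) (hm : 1 ≤ m) :
    boxD ι n t (2 * n + 1 - b) (occPos ι i m) =
      (if b = i + 1 ∧ t + n - i - 1 + (PD ι n i : ℤ) = m then 1 else 0)
      - (if b = i ∧ t + n - i + (PD ι n i : ℤ) = m then 1 else 0) := by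
  have hin : i ≤ n := by omega
  rcases Nat.lt_trichotomy b (n - 1) with h | h | h
  · rw [box_low hn t hb1 (by omega)]
    simp only [Pi.sub_apply, YY_apply' hadm _ _ hi1 hin hm]
    congr 2 <;> apply propext <;> omega
  · obtain rfl : b = n - 1 := h
    rw [box_pen hn]
    simp only [Pi.sub_apply, YY_apply' hadm _ _ hi1 hin hm]
    rw [if_neg (show ¬ (n = i ∧ _) by omega), sub_zero]
    congr 2 <;> apply propext <;> omega
  · obtain rfl : b = n := by omega
    rw [box_n hn]
    simp only [Pi.sub_apply, YY_apply' hadm _ _ hi1 hin hm]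
    congr 2 <;> apply propext <;> omega

lemma box_coeff_last (hn : 4 ≤ n) (hadm : Admissible n ι) (t : ℤ) {b m : ℕ}
    (hb1 : 1 ≤ b) (hb2 : b ≤ n) (hm : 1 ≤ m) :
    boxD ι n t (2 * n + 1 - b) (occPos ι n m) =
      - (if b = n ∧ t + 1 + (PD ι n n : ℤ) = m then 1 else 0)
      - (if b = n - 1 ∧ t + 1 + (PD ι n n : ℤ) = m then 1 else 0) := by
  have hi1 : 1 ≤ n := by omega
  rcases Nat.lt_trichotomy b (n - 1) with h | h | h
  · rw [box_low hn t hb1 (by omega)]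
    simp only [Pi.sub_apply, YY_apply' hadm _ _ hi1 le_rfl hm]
    rw [if_neg (by omega), if_neg (by omega), if_neg (by omega), if_neg (by omega)]
    norm_num
  · obtain rfl : b = n - 1 := h
    rw [box_pen hn]
    simp only [Pi.sub_apply, YY_apply' hadm _ _ hi1 le_rfl hm]
    rw [if_neg (show ¬ (n - 2 = n ∧ _) by omega), if_neg (show ¬ (n - 1 = n ∧ _) by omega)]
    simp
  · obtain rfl : b = n := by omega
    rw [box_n hn]
    simp only [Pi.sub_apply, YY_apply' hadm _ _ hi1 le_rfl hm]
    rw [if_neg (show ¬ (b - 1 = b ∧ _) by omega), if_neg (show ¬ (b = b - 1 ∧ _) by omega)]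
    simp

lemma TT_coeff_low (hn : 4 ≤ n) (hadm : Admissible n ι) (s : ℤ) {B : Finset ℕ}
    (hB : B ⊆ Finset.Icc 1 n) {i m : ℕ} (hi1 : 1 ≤ i) (hi2 : i ≤ n - 1) (hm : 1 ≤ m) :
    TT ι n s B (occPos ι i m) =
      (if i + 1 ∈ B then
        (if s + DD B (i + 1) + n - i - 1 + (PD ι n i : ℤ) = m then 1 else 0) else 0)
      - (if i ∈ B then (if s + DD B i + n - i + (PD ι n i : ℤ) = m then 1 else 0) else 0) := by
  unfold TT
  rw [Pi.add_apply, Finset.sum_apply, box_zero, YY_apply' hadm _ _ hi1 (by omega) hm,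
    if_neg (by omega), zero_add]
  rw [Finset.sum_congr rfl (fun b hb => box_coeff_low hn hadm (s + DD B b)
    (Finset.mem_Icc.1 (hB hb)).1 (Finset.mem_Icc.1 (hB hb)).2 hi1 hi2 hm)]
  simp only [ite_and, Finset.sum_sub_distrib, Finset.sum_ite_eq']

lemma TT_coeff_last (hn : 4 ≤ n) (hadm : Admissible n ι) (s : ℤ) {B : Finset ℕ}
    (hB : B ⊆ Finset.Icc 1 n) {m : ℕ} (hm : 1 ≤ m) :
    TT ι n s B (occPos ι n m) =
      (if s + B.card + (PD ι n n : ℤ) = m then 1 else 0)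
      - (if n ∈ B then (if s + DD B n + 1 + (PD ι n n : ℤ) = m then 1 else 0) else 0)
      - (if n - 1 ∈ B then
          (if s + DD B (n - 1) + 1 + (PD ι n n : ℤ) = m then 1 else 0) else 0) := by
  unfold TT
  rw [Pi.add_apply, Finset.sum_apply, box_zero, YY_apply' hadm _ _ (by omega) le_rfl hm]
  rw [Finset.sum_congr rfl (fun b hb => box_coeff_last hn hadm (s + DD B b)
    (Finset.mem_Icc.1 (hB hb)).1 (Finset.mem_Icc.1 (hB hb)).2 hm)]
  simp only [ite_and, Finset.sum_sub_distrib, Finset.sum_neg_distrib, Finset.sum_ite_eq', if_true]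
  ring

/-! ## The operators -/

lemma Sop_zero {A : ℕ → ℕ → ℤ} {k : ℕ} {φ : ℕ → ℚ} (h : φ k = 0) : Sop A ι k φ = φ := by
  simp [Sop, h]

lemma Sop_one {A : ℕ → ℕ → ℤ} {k : ℕ} {φ : ℕ → ℚ} (h : φ k = 1) :
    Sop A ι k φ = φ - beta A ι k := by
  simp [Sop, h]

lemma Sop_neg {A : ℕ → ℕ → ℤ} {k : ℕ} {φ : ℕ → ℚ} (h : φ k = -1) :
    Sop A ι k φ = φ + beta A ι (kminus ι k) := by
  have : ¬ ((0 : ℚ) < -1) := by norm_num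
  simp [Sop, h, this]

/-- Positive step at a letter `i < n`. -/
lemma Sop_up_low (hn : 4 ≤ n) (hadm : Admissible n ι) (hadap : Adapted n (cartanD n) ι)
    (s : ℤ) {C : Finset ℕ} (hC : C ⊆ Finset.Icc 1 n) {i m : ℕ} (hi1 : 1 ≤ i) (hi2 : i ≤ n - 1)
    (h1 : i ∉ C) (h2 : i + 1 ∉ C) (hm : 1 ≤ m)
    (hM : s + DD C i + n - i - 1 + (PD ι n i : ℤ) = m) :
    Sop (cartanD n) ι (occPos ι i m) (TT ι n s (insert (i + 1) C)) = TT ι n s (insert i C) := by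
  rw [TT_swap hn hadm hadap s hi1 hi2 h1 h2 hm hM]
  apply Sop_one
  rw [TT_coeff_low hn hadm s _ hi1 hi2 hm, if_pos (Finset.mem_insert_self _ _),
    if_neg (show i ∉ insert (i + 1) C by simp [h1]), DD_insert h2, DD_succ, if_neg h1,
    if_neg (lt_irrefl _), if_pos (by omega), sub_zero]
  intro x hx
  rcases Finset.mem_insert.1 hx with rfl | hx
  · exact Finset.mem_Icc.2 ⟨by omega, by omega⟩
  · exact hC hx

/-- Positive step at the letter `n`. -/
lemma Sop_up_last (hn : 4 ≤ n) (hadm : Admissible n ι) (hadap : Adapted n (cartanD n) ι)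
    (s : ℤ) {C : Finset ℕ} {m : ℕ} (hC : C ⊆ Finset.Icc 1 n)
    (h1 : n - 1 ∉ C) (h2 : n ∉ C) (hm : 1 ≤ m)
    (hM : s + DD C (n - 1) + (PD ι n n : ℤ) = m) :
    Sop (cartanD n) ι (occPos ι n m) (TT ι n s C) =
      TT ι n s (insert n (insert (n - 1) C)) := by
  rw [TT_add hn hadm hadap s hC h1 h2 hm hM]
  apply Sop_one
  have hcard := card_eq hn hC
  rw [if_neg h1, if_neg h2] at hcard
  rw [TT_coeff_last hn hadm s hC hm, if_neg h1, if_neg h2, if_pos (by omega)]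
  simp

lemma insert_sub {C : Finset ℕ} (hC : C ⊆ Finset.Icc 1 n) {i : ℕ} (h1 : 1 ≤ i) (h2 : i ≤ n) :
    insert i C ⊆ Finset.Icc 1 n :=
  Finset.insert_subset (Finset.mem_Icc.2 ⟨h1, h2⟩) hC

lemma erase_sub {C : Finset ℕ} (hC : C ⊆ Finset.Icc 1 n) (i : ℕ) :
    C.erase i ⊆ Finset.Icc 1 n := (Finset.erase_subset _ _).trans hC

/-- The set of tableaux is closed under all operators. -/
lemma TT_closed (hn : 4 ≤ n) (hadm : Admissible n ι) (hadap : Adapted n (cartanD n) ι)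
    (s : ℤ) {B : Finset ℕ} (hB : B ⊆ Finset.Icc 1 n) {k : ℕ} (hk : 1 ≤ k) :
    ∃ B' ⊆ Finset.Icc 1 n, B'.card % 2 = B.card % 2 ∧
      Sop (cartanD n) ι k (TT ι n s B) = TT ι n s B' := by
  obtain ⟨hi1, hi2⟩ := hadm.1 k hk
  obtain ⟨m, hm, hkm⟩ := occ_surj hadm hk
  generalize ι k = i at *
  subst hkm
  rcases Nat.lt_or_ge i n with hin | hin
  · have hi3 : i ≤ n - 1 := by omega
    have hco := TT_coeff_low hn hadm s hB hi1 hi3 hm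
    have hDs := DD_succ B i
    by_cases h1 : i ∈ B <;> by_cases h2 : i + 1 ∈ B
    · refine ⟨B, hB, rfl, Sop_zero ?_⟩
      rw [hco, if_pos h1, if_pos h2, hDs, if_pos h1, sub_eq_zero]
      congr 1
      apply propext; omega
    · -- negative coefficient
      rw [if_pos h1, if_neg h2, zero_sub] at hco
      by_cases he : s + DD B i + n - i + (PD ι n i : ℤ) = m
      · rw [if_pos he] at hco
        obtain ⟨t, rfl⟩ : ∃ t, m = t + 1 := ⟨m - 1, by omega⟩
        rw [Sop_neg hco, kminus_occ hadm hi1 hi2]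
        rcases Nat.eq_zero_or_pos t with rfl | ht
        · exact ⟨B, hB, rfl, by simp [occPos, beta]⟩
        · have e1 : i ∉ B.erase i := by simp
          have e2 : i + 1 ∉ B.erase i := by simp [h2]
          have eB : insert i (B.erase i) = B := Finset.insert_erase h1
          have eD : DD (B.erase i) i = DD B i := by
            conv_rhs => rw [← eB, DD_insert e1]
            simp
          refine ⟨insert (i + 1) (B.erase i), insert_sub (erase_sub hB i) (by omega) (by omega),
            ?_, ?_⟩
          · rw [Finset.card_insert_of_notMem e2, ← eB, Finset.card_insert_of_notMem e1, eB]
          · have := TT_swap hn hadm hadap s hi1 hi3 e1 e2 ht (by rw [eD]; push_cast at he; omega)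
            rw [eB] at this
            rw [this]; abel
      · rw [if_neg he] at hco
        exact ⟨B, hB, rfl, Sop_zero (by rw [hco]; simp)⟩
    · rw [if_neg h1, if_pos h2, sub_zero] at hco
      by_cases he : s + DD B (i + 1) + n - i - 1 + (PD ι n i : ℤ) = m
      · have e1 : i ∉ B.erase (i + 1) := by simp [h1]
        have e2 : i + 1 ∉ B.erase (i + 1) := by simp
        have eB : insert (i + 1) (B.erase (i + 1)) = B := Finset.insert_erase h2
        have eD : DD (B.erase (i + 1)) i = DD B i := by
          conv_rhs => rw [← eB, DD_insert e2]
          simp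
        rw [if_neg h1] at hDs
        refine ⟨insert i (B.erase (i + 1)), insert_sub (erase_sub hB _) (by omega) (by omega),
          ?_, ?_⟩
        · rw [Finset.card_insert_of_notMem e1, ← eB, Finset.card_insert_of_notMem e2, eB]
        · have := Sop_up_low hn hadm hadap s (erase_sub hB _) hi1 hi3 e1 e2 hm
            (by rw [eD]; omega)
          rw [eB] at this
          exact this
      · rw [if_neg he] at hco
        exact ⟨B, hB, rfl, Sop_zero hco⟩
    · refine ⟨B, hB, rfl, Sop_zero ?_⟩
      rw [hco, if_neg h1, if_neg h2, sub_zero]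
  · obtain rfl : i = n := by omega
    have hco := TT_coeff_last hn hadm s hB hm
    have hDs := DD_succ B (i - 1)
    rw [Nat.sub_add_cancel hi1] at hDs
    have hcard := card_eq hn hB
    by_cases h1 : i - 1 ∈ B <;> by_cases h2 : i ∈ B <;>
      simp only [h1, h2, if_true, if_false] at hco hDs hcard
    · by_cases he : s + DD B (i - 1) + 1 + (PD ι i i : ℤ) = m
      · rw [if_neg (by omega), if_neg (by omega), if_pos he] at hco
        obtain ⟨t, rfl⟩ : ∃ t, m = t + 1 := ⟨m - 1, by omega⟩
        rw [Sop_neg (by rw [hco]; norm_num), kminus_occ hadm hi1 hi2]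
        rcases Nat.eq_zero_or_pos t with rfl | ht
        · exact ⟨B, hB, rfl, by simp [occPos, beta]⟩
        · have e2 : i ∉ B.erase i := by simp
          have e2' : i - 1 ∈ B.erase i := by
            rw [Finset.mem_erase]; exact ⟨by omega, h1⟩
          have e1 : i - 1 ∉ (B.erase i).erase (i - 1) := by simp
          have e3 : i ∉ (B.erase i).erase (i - 1) := by simp
          have eB : insert i (B.erase i) = B := Finset.insert_erase h2
          have eB' : insert (i - 1) ((B.erase i).erase (i - 1)) = B.erase i :=
            Finset.insert_erase e2'
          have eD : DD ((B.erase i).erase (i - 1)) (i - 1) = DD B (i - 1) := by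
            conv_rhs => rw [← eB, DD_insert e2, ← eB', DD_insert e1]
            simp
          refine ⟨(B.erase i).erase (i - 1), erase_sub (erase_sub hB i) _, ?_, ?_⟩
          · conv_rhs => rw [← eB, Finset.card_insert_of_notMem e2, ← eB',
              Finset.card_insert_of_notMem e1]
            omega
          · have := TT_add hn hadm hadap s (erase_sub (erase_sub hB i) (i - 1)) e1 e3 ht
              (by rw [eD]; push_cast at he; omega)
            rw [eB', eB] at this
            rw [this]; abel
      · refine ⟨B, hB, rfl, Sop_zero ?_⟩
        rw [hco, if_neg he, sub_zero, sub_eq_zero]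
        congr 1
        apply propext; omega
    · refine ⟨B, hB, rfl, Sop_zero ?_⟩
      rw [hco, sub_zero, sub_eq_zero]
      congr 1
      apply propext; omega
    · refine ⟨B, hB, rfl, Sop_zero ?_⟩
      rw [hco, sub_zero, sub_eq_zero]
      congr 1
      apply propext; omega
    · by_cases he : s + B.card + (PD ι i i : ℤ) = m
      · refine ⟨_, insert_sub (insert_sub hB (i := i - 1) (by omega) (by omega)) hi1 le_rfl, ?_,
          Sop_up_last hn hadm hadap s hB h1 h2 hm (by omega)⟩
        rw [Finset.card_insert_of_notMem, Finset.card_insert_of_notMem h1]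
        · omega
        · rw [Finset.mem_insert, not_or]; exact ⟨by omega, h2⟩
      · refine ⟨B, hB, rfl, Sop_zero ?_⟩
        rw [hco, if_neg he]; simp

/-- Weight used for the induction. -/
def wt (n : ℕ) (B : Finset ℕ) : ℕ := ∑ b ∈ B, (n + 1 - b)

lemma TT_reach (hn : 4 ≤ n) (hadm : Admissible n ι) (hadap : Adapted n (cartanD n) ι)
    (s : ℤ) (q : ℕ) (g : Set (ℕ → ℚ))
    (hbase : ∀ B ⊆ ({n} : Finset ℕ), (B.card + 1) % 2 = q →
      XiMemFrom (cartanD n) ι g (TT ι n s B))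
    (H1 : 1 ≤ s + 1 + (PD ι n (n - 2) : ℤ))
    (H2 : ∀ c : ℕ, c % 2 = q → 1 ≤ s + c + (PD ι n (n - 1) : ℤ))
    (H3 : ∀ c : ℕ, (c + 1) % 2 = q → 1 ≤ s + c + (PD ι n n : ℤ))
    (B : Finset ℕ) (hB : B ⊆ Finset.Icc 1 n) (hq : (B.card + 1) % 2 = q) :
    XiMemFrom (cartanD n) ι g (TT ι n s B) := by
  induction hw : wt n B using Nat.strong_induction_on generalizing B with
  | _ w ih =>
  by_cases hlast : n - 1 ∈ B ∧ n ∈ B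
  · obtain ⟨h1, h2⟩ := hlast
    have e2 : n ∉ B.erase n := by simp
    have e2' : n - 1 ∈ B.erase n := by
      rw [Finset.mem_erase]; exact ⟨by omega, h1⟩
    have e1 : n - 1 ∉ (B.erase n).erase (n - 1) := by simp
    have e3 : n ∉ (B.erase n).erase (n - 1) := by simp
    have eB : insert n (B.erase n) = B := Finset.insert_erase h2
    have eB' : insert (n - 1) ((B.erase n).erase (n - 1)) = B.erase n :=
      Finset.insert_erase e2'
    have hC : (B.erase n).erase (n - 1) ⊆ Finset.Icc 1 n := erase_sub (erase_sub hB n) _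
    generalize (B.erase n).erase (n - 1) = C at *
    have hcB : B.card = C.card + 2 := by
      rw [← eB, Finset.card_insert_of_notMem e2, ← eB', Finset.card_insert_of_notMem e1]
    have hwB : wt n C < w := by
      rw [← hw]
      unfold wt
      rw [← eB, Finset.sum_insert e2, ← eB', Finset.sum_insert e1]
      omega
    have hcard := card_eq hn hC
    rw [if_neg e1, if_neg e3] at hcard
    have hb := H3 C.card (by omega)
    have hrec := ih _ hwB C hC (by omega) rfl
    have := Sop_up_last hn hadm hadap s hC e1 e3
      (m := (s + C.card + (PD ι n n : ℤ)).toNat) (by omega) (by omega)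
    rw [eB', eB] at this
    rw [← this]
    exact XiMemFrom.step _ (occ_pos hadm (by omega) le_rfl (by omega)) _ hrec
  · by_cases hlow : (B.filter (fun b => b < n)).Nonempty
    · obtain ⟨i, hi, hmax⟩ := Finset.exists_max_image _ id hlow
      simp only [Finset.mem_filter, id] at hi hmax
      obtain ⟨h1, hin⟩ := hi
      have hi1 := (Finset.mem_Icc.1 (hB h1)).1
      have h2 : i + 1 ∉ B := by
        intro h
        rcases Nat.lt_or_ge (i + 1) n with h' | h'
        · have := hmax _ ⟨h, h'⟩
          omega
        · apply hlast
          rw [show n - 1 = i by omega]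
          rw [show i + 1 = n by omega] at h
          exact ⟨h1, h⟩
      have e1 : i ∉ B.erase i := by simp
      have e2 : i + 1 ∉ B.erase i := by simp [h2]
      have eB : insert i (B.erase i) = B := Finset.insert_erase h1
      have hC : B.erase i ⊆ Finset.Icc 1 n := erase_sub hB _
      generalize B.erase i = C at *
      have hcB : B.card = C.card + 1 := by
        rw [← eB, Finset.card_insert_of_notMem e1]
      have hwB : wt n (insert (i + 1) C) < w := by
        rw [← hw]
        unfold wt
        rw [← eB, Finset.sum_insert e1, Finset.sum_insert e2]
        omega
      have hb : 1 ≤ s + DD C i + n - i - 1 + (PD ι n i : ℤ) := by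
        have hD := DD_nonneg C i
        rcases Nat.lt_or_ge (i + 1) n with h' | h'
        · have := (PD_growth (n := n) (ι := ι) (i := i) (j := n - 2) hi1 (by omega) (by omega)).2
          omega
        · obtain rfl : i = n - 1 := by omega
          rw [Nat.sub_add_cancel (by omega)] at e2
          have hcard := card_eq hn hC
          rw [if_neg e1, if_neg e2] at hcard
          have := H2 C.card (by omega)
          omega
      have hrec := ih _ hwB (insert (i + 1) C) (insert_sub hC (by omega) (by omega))
        (by rw [Finset.card_insert_of_notMem e2]; omega) rfl
      have := Sop_up_low hn hadm hadap s hC hi1 (by omega) e1 e2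
        (m := (s + DD C i + n - i - 1 + (PD ι n i : ℤ)).toNat) (by omega) (by omega)
      rw [eB] at this
      rw [← this]
      exact XiMemFrom.step _ (occ_pos hadm (by omega) (by omega) (by omega)) _ hrec
    · apply hbase B _ hq
      intro b hb
      rw [Finset.mem_singleton]
      by_contra hne
      apply hlow
      have := Finset.mem_Icc.1 (hB hb)
      exact ⟨b, Finset.mem_filter.2 ⟨hb, by omega⟩⟩

/-! ## Column tableaux versus sets -/

lemma tab_eq_TT (s : ℤ) {k : ℕ} {j : ℕ → ℕ} (hj1 : j 1 = 0) (hk : 1 ≤ k)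
    (hr : ∀ i, 2 ≤ i → i ≤ k → n + 1 ≤ j i ∧ j i ≤ 2 * n)
    (hinc : ∀ i, 2 ≤ i → i < k → j i < j (i + 1)) :
    ∃ B ⊆ Finset.Icc 1 n, B.card + 1 = k ∧ tab (boxD ι n) s k j = TT ι n s B ∧
      B = (Finset.Icc 2 k).image (fun i => 2 * n + 1 - j i) := by
  have hmono : ∀ a b, 2 ≤ a → a < b → b ≤ k → j a < j b := by
    intro a b ha hab
    induction b, hab using Nat.le_induction with
    | base => intro h; exact hinc a ha (by omega)
    | succ b hb ih => intro h; exact (ih (by omega)).trans (hinc b (by omega) (by omega))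
  have hiff : ∀ a b, 2 ≤ a → a ≤ k → 2 ≤ b → b ≤ k →
      (2 * n + 1 - j a < 2 * n + 1 - j b ↔ b < a) := by
    intro a b ha ha' hb hb'
    have h1 := hr a ha ha'
    have h2 := hr b hb hb'
    rcases Nat.lt_trichotomy a b with h | rfl | h
    · have := hmono a b ha h hb'
      omega
    · omega
    · have := hmono b a hb h ha'
      omega
  have hinj : Set.InjOn (fun i => 2 * n + 1 - j i) (Finset.Icc 2 k : Finset ℕ) := by
    intro a ha b hb hab
    simp only [Finset.coe_Icc, Set.mem_Icc] at ha hb hab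
    have h1 := hiff a b ha.1 ha.2 hb.1 hb.2
    have h2 := hiff b a hb.1 hb.2 ha.1 ha.2
    omega
  have hcard : ((Finset.Icc 2 k).image (fun i => 2 * n + 1 - j i)).card = k - 1 := by
    rw [Finset.card_image_of_injOn hinj]
    simp
  refine ⟨_, ?_, ?_, ?_, rfl⟩
  · intro b hb
    simp only [Finset.mem_image, Finset.mem_Icc] at hb ⊢
    obtain ⟨a, ha, rfl⟩ := hb
    have := hr a ha.1 ha.2
    omega
  · rw [hcard]; omega
  · unfold TT tab
    rw [hcard, Finset.sum_image hinj, Finset.Icc_eq_cons_Ioc hk, Finset.sum_cons, hj1]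
    have hset : Finset.Ioc 1 k = Finset.Icc 2 k := by
      ext a; simp only [Finset.mem_Ioc, Finset.mem_Icc]; omega
    rw [hset]
    congr 1
    · congr 1; push_cast [hk]; ring
    · apply Finset.sum_congr rfl
      intro a ha
      rw [Finset.mem_Icc] at ha
      have h1 := hr a ha.1 ha.2
      have hD : DD ((Finset.Icc 2 k).image (fun i => 2 * n + 1 - j i)) (2 * n + 1 - j a)
          = k - a := by
        unfold DD
        rw [Finset.filter_image, Finset.card_image_of_injOn]
        · have : (Finset.Icc 2 k).filter (fun i => 2 * n + 1 - j i < 2 * n + 1 - j a)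
              = Finset.Ioc a k := by
            ext b
            simp only [Finset.mem_filter, Finset.mem_Icc, Finset.mem_Ioc]
            constructor
            · rintro ⟨hb, hlt⟩
              rw [hiff b a hb.1 hb.2 ha.1 ha.2] at hlt
              omega
            · intro hb
              refine ⟨by omega, ?_⟩
              rw [hiff b a (by omega) hb.2 ha.1 ha.2]
              omega
          rw [this, Nat.card_Ioc]
          omega
        · intro x hx y hy hxy
          simp only [Finset.coe_filter, Set.mem_ofPred_eq] at hx hy
          exact hinj (Finset.mem_coe.2 hx.1) (Finset.mem_coe.2 hy.1) hxy
      rw [hD, show 2 * n + 1 - (2 * n + 1 - j a) = j a by omega]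
      congr 1; ring

lemma TT_eq_tab (s : ℤ) {B : Finset ℕ} (hB : B ⊆ Finset.Icc 1 n) :
    ∃ j : ℕ → ℕ, j 1 = 0 ∧
      (∀ i, 2 ≤ i → i ≤ B.card + 1 → n + 1 ≤ j i ∧ j i ≤ 2 * n) ∧
      (∀ i, 2 ≤ i → i < B.card + 1 → j i < j (i + 1)) ∧
      TT ι n s B = tab (boxD ι n) s (B.card + 1) j := by
  set e : ℕ → ℕ := Nat.nth (fun b => b ∈ B) with he
  have hfin : (Set.ofPred fun b => b ∈ B).Finite := B.finite_toSet
  have hcf : hfin.toFinset.card = B.card := by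
    congr 1; ext b; simp
  have hmem : ∀ t < B.card, e t ∈ B := fun t ht =>
    Nat.nth_mem_of_lt_card hfin (by rw [hcf]; exact ht)
  have hlt : ∀ t u, t < u → u < B.card → e t < e u := fun t u htu hu =>
    Nat.nth_lt_nth' htu (fun hf => by rw [hcf]; exact hu)
  set j : ℕ → ℕ := fun i => if i = 1 then 0 else 2 * n + 1 - e (B.card + 1 - i) with hj
  have hjv : ∀ i, 2 ≤ i → j i = 2 * n + 1 - e (B.card + 1 - i) := by
    intro i hi
    simp only [hj]; rw [if_neg (by omega)]
  have hj1 : j 1 = 0 := by simp [hj]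
  have hr : ∀ i, 2 ≤ i → i ≤ B.card + 1 → n + 1 ≤ j i ∧ j i ≤ 2 * n := by
    intro i h1 h2
    rw [hjv i h1]
    have := Finset.mem_Icc.1 (hB (hmem (B.card + 1 - i) (by omega)))
    omega
  have hinc : ∀ i, 2 ≤ i → i < B.card + 1 → j i < j (i + 1) := by
    intro i h1 h2
    rw [hjv i h1, hjv (i + 1) (by omega)]
    have h3 := Finset.mem_Icc.1 (hB (hmem (B.card + 1 - i) (by omega)))
    have h4 := hlt (B.card + 1 - (i + 1)) (B.card + 1 - i) (by omega) (by omega)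
    omega
  refine ⟨j, hj1, hr, hinc, ?_⟩
  obtain ⟨B', hB', hc, ht, himg⟩ := tab_eq_TT (ι := ι) s hj1 (by omega) hr hinc
  have : B' = B := by
    apply Finset.eq_of_subset_of_card_le
    · rw [himg]
      intro b hb
      simp only [Finset.mem_image, Finset.mem_Icc] at hb
      obtain ⟨a, ha, rfl⟩ := hb
      have h3 := hmem (B.card + 1 - a) (by omega)
      have h4 := Finset.mem_Icc.1 (hB h3)
      rw [hjv a ha.1, show 2 * n + 1 - (2 * n + 1 - e (B.card + 1 - a)) = e (B.card + 1 - a) by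
        omega]
      exact h3
    · omega
  rw [ht, this]

/-- Common form of both halves of the theorem. -/
lemma xi_aux (hn : 4 ≤ n) (hadm : Admissible n ι) (hadap : Adapted n (cartanD n) ι)
    (q : ℕ) (g : Set (ℕ → ℚ)) (s0 : ℤ)
    (hg : ∀ ψ ∈ g, ∃ s, s0 ≤ s ∧ ∃ B ⊆ Finset.Icc 1 n, (B.card + 1) % 2 = q ∧ ψ = TT ι n s B)
    (hbase : ∀ s, s0 ≤ s → ∀ B ⊆ ({n} : Finset ℕ), (B.card + 1) % 2 = q → TT ι n s B ∈ g)
    (H1 : 1 ≤ s0 + 1 + (PD ι n (n - 2) : ℤ))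
    (H2 : ∀ c : ℕ, c % 2 = q → 1 ≤ s0 + c + (PD ι n (n - 1) : ℤ))
    (H3 : ∀ c : ℕ, (c + 1) % 2 = q → 1 ≤ s0 + c + (PD ι n n : ℤ)) :
    { φ : ℕ → ℚ | XiMemFrom (cartanD n) ι g φ } =
      { T : ℕ → ℚ | ∃ (k : ℕ) (s : ℤ) (j : ℕ → ℕ),
          j 1 = 0 ∧ 1 ≤ k ∧ k ≤ n + 1 ∧ k % 2 = q ∧
          (∀ i, 2 ≤ i → i ≤ k → n + 1 ≤ j i ∧ j i ≤ 2 * n) ∧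
          (∀ i, 2 ≤ i → i < k → j i < j (i + 1)) ∧
          s0 ≤ s ∧
          T = tab (boxD ι n) s k j } := by
  apply Set.Subset.antisymm
  · intro φ hφ
    have hφ' : XiMemFrom (cartanD n) ι g φ := hφ
    have : ∃ s, s0 ≤ s ∧ ∃ B ⊆ Finset.Icc 1 n, (B.card + 1) % 2 = q ∧ φ = TT ι n s B := by
      induction hφ' with
      | base φ h => exact hg φ h
      | step k hk φ h ih =>
        obtain ⟨s, hs, B, hB, hq, rfl⟩ := ih h
        obtain ⟨B', hB', hc, he⟩ := TT_closed hn hadm hadap s hB hk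
        exact ⟨s, hs, B', hB', by omega, he⟩
    obtain ⟨s, hs, B, hB, hq, rfl⟩ := this
    obtain ⟨j, h1, h2, h3, h4⟩ := TT_eq_tab (ι := ι) s hB
    have hcard := Finset.card_le_card hB
    rw [Nat.card_Icc] at hcard
    exact ⟨B.card + 1, s, j, h1, by omega, by omega, hq, h2, h3, hs, h4⟩
  · rintro T ⟨k, s, j, h1, h2, h3, h4, h5, h6, hs, rfl⟩
    obtain ⟨B, hB, hc, ht, -⟩ := tab_eq_TT (ι := ι) s h1 h2 h5 h6
    show XiMemFrom (cartanD n) ι g _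
    rw [ht]
    refine TT_reach hn hadm hadap s q g
      (fun B hB hq => XiMemFrom.base _ (hbase s hs B hB hq)) (by omega) ?_ ?_ B hB (by rw [hc, h4])
    · intro c hc; have := H2 c hc; omega
    · intro c hc; have := H3 c hc; omega

lemma TT_empty (s : ℤ) : TT ι n s ∅ = YY ι n s n := by
  simp [TT, box_zero]

lemma TT_single (hn : 4 ≤ n) (s : ℤ) : TT ι n s {n} = YY ι n s (n - 1) := by
  have : DD {n} n = 0 := by simp [DD]
  simp only [TT, Finset.sum_singleton, Finset.card_singleton, this, box_zero, box_n hn]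
  simp

end Main

/-- Lemma 5.10: in type D, (i) the forms obtained from the `x_{r,n-1}` (`r ≥ 1`) by the
operators `S_l` are exactly the tableaux of `Tab_{D,ι}` with first entry `ovl(n+1)`
(encoded `0`) and an even number of rows; (ii) those obtained from the `x_{r,n}` are
exactly such tableaux with an odd number of rows. -/
theorem xi_from_xrn_D (n : ℕ) (hn : 4 ≤ n) (ι : ℕ → ℕ)
    (hadm : Admissible n ι) (hadap : Adapted n (cartanD n) ι) :
    ({ φ : ℕ → ℚ |
        XiMemFrom (cartanD n) ι { ψ | ∃ r, 1 ≤ r ∧ ψ = xc (occPos ι (n - 1) r) } φ } =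
      { T : ℕ → ℚ | ∃ (k : ℕ) (s : ℤ) (j : ℕ → ℕ),
          j 1 = 0 ∧ 1 ≤ k ∧ k ≤ n + 1 ∧ k % 2 = 0 ∧
          (∀ i, 2 ≤ i → i ≤ k → n + 1 ≤ j i ∧ j i ≤ 2 * n) ∧
          (∀ i, 2 ≤ i → i < k → j i < j (i + 1)) ∧
          1 - (PD ι n (n - 1) : ℤ) ≤ s ∧
          T = tab (boxD ι n) s k j }) ∧
    ({ φ : ℕ → ℚ |
        XiMemFrom (cartanD n) ι { ψ | ∃ r, 1 ≤ r ∧ ψ = xc (occPos ι n r) } φ } =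
      { T : ℕ → ℚ | ∃ (k : ℕ) (s : ℤ) (j : ℕ → ℕ),
          j 1 = 0 ∧ 1 ≤ k ∧ k ≤ n + 1 ∧ k % 2 = 1 ∧
          (∀ i, 2 ≤ i → i ≤ k → n + 1 ≤ j i ∧ j i ≤ 2 * n) ∧
          (∀ i, 2 ≤ i → i < k → j i < j (i + 1)) ∧
          1 - (PD ι n n : ℤ) ≤ s ∧
          T = tab (boxD ι n) s k j }) := by
  have hP1 := PD_growth (n := n) (ι := ι) (i := n - 2) (j := n - 1) (by omega) (by omega) le_rfl
  have hP2 := PD_last (ι := ι) hn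
  have hp := pval_le (ι := ι) n (n - 2)
  constructor
  · apply xi_aux hn hadm hadap
    · rintro ψ ⟨r, hr, rfl⟩
      refine ⟨r - (PD ι n (n - 1) : ℤ), by omega, {n}, ?_, by simp, ?_⟩
      · simp; omega
      · rw [TT_single hn, YY_eq (m := r) (by omega) (by omega) hr (by ring)]
    · intro s hs B hB hq
      rcases Finset.subset_singleton_iff.1 hB with rfl | rfl
      · simp at hq
      · refine ⟨(s + (PD ι n (n - 1) : ℤ)).toNat, by omega, ?_⟩
        rw [TT_single hn, YY_eq (m := (s + (PD ι n (n - 1) : ℤ)).toNat) (by omega) (by omega) (by omega) (by omega)]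
    · omega
    · intro c hc; omega
    · intro c hc; omega
  · apply xi_aux hn hadm hadap
    · rintro ψ ⟨r, hr, rfl⟩
      refine ⟨r - (PD ι n n : ℤ), by omega, ∅, by simp, by simp, ?_⟩
      rw [TT_empty, YY_eq (m := r) (by omega) (by omega) hr (by ring)]
    · intro s hs B hB hq
      rcases Finset.subset_singleton_iff.1 hB with rfl | rfl
      · refine ⟨(s + (PD ι n n : ℤ)).toNat, by omega, ?_⟩
        rw [TT_empty, YY_eq (m := (s + (PD ι n n : ℤ)).toNat) (by omega) (by omega) (by omega) (by omega)]
      · simp at hq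
    · omega
    · intro c hc; omega
    · intro c hc; omega
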